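/- Every elementary factorial Schur multiple zeta value ζ_{λ,s}(𝐬,𝐭) of hook shape λ = (λ₁,1^{k-1}) with positive integer exponents (corner and final-chain exponents ≥ 2 for convergence) is a ℚ-linear combination (indeed a ℤ-linear combination) of multiple zeta values ζ(k₁,…,k_r) of Euler–Zagier type of the same weight. -/

import Mathlib

/-- General multiple zeta value `ζ(k₁,…,k_r)` for `k : Fin r → ℕ`. -/
noncomputable def mzv {r : ℕ} (k : Fin r → ℕ) : ℝ :=
  ∑' n : {n : Fin r → ℕ // StrictMono n ∧ ∀ i, 0 < n i},
    (∏ i, (((n : Fin r → ℕ) i : ℝ)) ^ (k i))⁻¹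

/-- Elementary factorial Schur MZV of hook shape `(r', 1^{r-1})` (row extras indexed by
`Fin n`, column by `Fin r`) with chain length `s`:
`Σ_{m₁<⋯<m_s, column v₁<⋯<v_r, row v₁ ≤ b_j (weakly increasing)}`
`∏ m_i^{-t_i} ∏ b_j^{-kr_j} ∏ (m_s + v_i)^{-kc_i}`. -/
noncomputable def efHook (s n r : ℕ) (hs : 0 < s) (hr : 0 < r)
    (t : Fin s → ℕ) (kr : Fin n → ℕ) (kc : Fin r → ℕ) : ℝ :=
  ∑' x : {x : (Fin s → ℕ) × (Fin r → ℕ) × (Fin n → ℕ) //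
      StrictMono x.1 ∧ (∀ i, 0 < x.1 i) ∧ StrictMono x.2.1 ∧ 0 < x.2.1 ⟨0, hr⟩
        ∧ Monotone x.2.2 ∧ ∀ j, x.2.1 ⟨0, hr⟩ ≤ x.2.2 j},
    (∏ i, ((x.1.1 i : ℝ)) ^ (t i))⁻¹ * (∏ j, ((x.1.2.2 j : ℝ)) ^ (kr j))⁻¹
      * (∏ i, (((x.1.1 ⟨s - 1, by omega⟩ + x.1.2.1 i : ℕ) : ℝ)) ^ (kc i))⁻¹

open scoped ENNReal PowerSeries

/-- The term `n ^ (-k)` in `[0, ∞]`, with the convention that it vanishes at `n = 0` for `k ≠ 0`. -/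
noncomputable def invPow (k n : ℕ) : ℝ≥0∞ := ENNReal.ofReal (((n : ℝ) ^ k)⁻¹)

theorem invPow_apply_zero {k : ℕ} (hk : 1 ≤ k) : invPow k 0 = 0 := by
  simp [invPow, Nat.one_le_iff_ne_zero.mp hk]

theorem invPow_zero (n : ℕ) : invPow 0 n = 1 := by simp [invPow]

theorem invPow_add (k l n : ℕ) : invPow (k + l) n = invPow k n * invPow l n := by
  rw [invPow, invPow, invPow, ← ENNReal.ofReal_mul (by positivity), pow_add, mul_inv]

theorem natCast_mul_invPow_one {n : ℕ} (hn : n ≠ 0) : (n : ℝ≥0∞) * invPow 1 n = 1 := by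
  have h : (0 : ℝ) < n := by positivity
  rw [invPow, ← ENNReal.ofReal_natCast, ← ENNReal.ofReal_mul h.le, pow_one,
    mul_inv_cancel₀ h.ne', ENNReal.ofReal_one]

section ChainSum

/-- The tuple `x` is a chain for the (transitive) relation `R`, starting above `c`. -/
def IsChainFrom (R : ℕ → ℕ → Prop) (c : ℕ) {n : ℕ} (x : Fin n → ℕ) : Prop :=
  (∀ j, R c (x j)) ∧ ∀ i j, i < j → R (x i) (x j)

open Classical in
/-- Iterated sum over chains `c R a₁ R a₂ R ⋯` of the products `f₁ a₁ * f₂ a₂ * ⋯`, weighted by `h`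
at the last element of the chain. -/
noncomputable def chainSum (R : ℕ → ℕ → Prop) :
    List (ℕ → ℝ≥0∞) → (ℕ → ℝ≥0∞) → ℕ → ℝ≥0∞
  | [], h, c => h c
  | f :: fs, h, c => ∑' a, if R c a then f a * chainSum R fs h a else 0

theorem isChainFrom_cons {R : ℕ → ℕ → Prop} (hR : ∀ a b c, R a b → R b c → R a c) {c a n : ℕ}
    {x : Fin n → ℕ} :
    IsChainFrom R c (Fin.cons a x : Fin (n + 1) → ℕ) ↔ R c a ∧ IsChainFrom R a x := by
  simp only [IsChainFrom, Fin.forall_fin_succ, Fin.cons_zero, Fin.cons_succ,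
    Fin.succ_lt_succ_iff, Fin.succ_pos, Fin.not_lt_zero]
  constructor
  · rintro ⟨⟨h1, -⟩, ⟨-, h2⟩, h3⟩
    exact ⟨h1, fun j => h2 j trivial, fun i => (h3 i).2⟩
  · rintro ⟨h1, h2, h3⟩
    exact ⟨⟨h1, fun j => hR _ _ _ h1 (h2 j)⟩, ⟨nofun, fun j _ => h2 j⟩,
      fun i => ⟨nofun, h3 i⟩⟩

open Classical in
theorem tsum_isChainFrom {R : ℕ → ℕ → Prop} (hR : ∀ a b c, R a b → R b c → R a c) :
    ∀ {n : ℕ} (f : Fin n → ℕ → ℝ≥0∞) (h : ℕ → ℝ≥0∞) (c : ℕ),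
      (∑' x : Fin n → ℕ, if IsChainFrom R c x then
        (∏ i, f i (x i)) * h ((Fin.cons c x : Fin (n + 1) → ℕ) (Fin.last n)) else 0)
        = chainSum R (List.ofFn f) h c := by
  intro n
  induction n with
  | zero =>
    intro f h c
    rw [tsum_eq_single (fun i => i.elim0) (fun x hx => (hx (Subsingleton.elim _ _)).elim),
      if_pos ⟨fun j => j.elim0, fun i => i.elim0⟩]
    simp [chainSum]
  | succ n ih =>
    intro f h c
    rw [← (Fin.consEquiv (fun _ : Fin (n + 1) => ℕ)).tsum_eq, ENNReal.tsum_prod', List.ofFn_succ,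
      chainSum]
    refine tsum_congr fun a => ?_
    have key (x : Fin n → ℕ) : IsChainFrom R c (Fin.consEquiv (fun _ : Fin (n + 1) => ℕ) (a, x)) ↔
        R c a ∧ IsChainFrom R a x := isChainFrom_cons hR
    by_cases hca : R c a
    · rw [if_pos hca, ← ih, ← ENNReal.tsum_mul_left]
      refine tsum_congr fun x => ?_
      by_cases hx : IsChainFrom R a x
      · rw [if_pos hx, if_pos ((key x).mpr ⟨hca, hx⟩), Fin.prod_univ_succ, ← Fin.succ_last,
          Fin.cons_succ, mul_assoc]
        rfl
      · rw [if_neg hx, if_neg fun h => hx ((key x).mp h).2, mul_zero]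
    · rw [if_neg hca, ENNReal.tsum_eq_zero]
      exact fun x => if_neg fun h => hca ((key x).mp h).1

end ChainSum

section Words

/-- The power series `X / (1 - X)`. -/
noncomputable def geo : ℝ≥0∞⟦X⟧ := PowerSeries.mk fun n => if n = 0 then 0 else 1

/-- Multiply the `n`-th coefficient by `n ^ (-k)`. -/
noncomputable def scale (k : ℕ) (F : ℝ≥0∞⟦X⟧) : ℝ≥0∞⟦X⟧ :=
  PowerSeries.mk fun n => invPow k n * PowerSeries.coeff n F

/-- The multiple polylogarithm attached to a word of exponents, the exponent of the largest
summation index coming first. -/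
noncomputable def polylog : List ℕ → ℝ≥0∞⟦X⟧
  | [] => 1
  | k :: w => scale k (geo * polylog w)

theorem coeff_scale (k n : ℕ) (F : ℝ≥0∞⟦X⟧) :
    PowerSeries.coeff n (scale k F) = invPow k n * PowerSeries.coeff n F :=
  PowerSeries.coeff_mk _ _

theorem coeff_geo_mul (n : ℕ) (F : ℝ≥0∞⟦X⟧) :
    PowerSeries.coeff n (geo * F) = ∑ j ∈ Finset.range n, PowerSeries.coeff j F := by
  rw [mul_comm, PowerSeries.coeff_mul, Finset.Nat.sum_antidiagonal_eq_sum_range_succ_mk,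
    Finset.sum_range_succ]
  simp only [geo, PowerSeries.coeff_mk, tsub_self, if_true, mul_zero, add_zero]
  refine Finset.sum_congr rfl fun j hj => ?_
  rw [if_neg (by have := Finset.mem_range.mp hj; omega), mul_one]

theorem scale_add (k : ℕ) (F G : ℝ≥0∞⟦X⟧) : scale k (F + G) = scale k F + scale k G := by
  ext n; simp [coeff_scale, mul_add]

theorem scale_zero_right (k : ℕ) : scale k 0 = 0 := by
  ext n; simp [coeff_scale]

theorem scale_scale (k l : ℕ) (F : ℝ≥0∞⟦X⟧) : scale k (scale l F) = scale (k + l) F := by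
  ext n; simp [coeff_scale, invPow_add, mul_assoc]

theorem scale_zero_left (F : ℝ≥0∞⟦X⟧) : scale 0 F = F := by
  ext n; simp [coeff_scale, invPow_zero]

theorem coeff_zero_scale_geo (k : ℕ) (F : ℝ≥0∞⟦X⟧) :
    PowerSeries.coeff 0 (scale k (geo * F)) = 0 := by
  rw [coeff_scale, coeff_geo_mul]; simp

theorem natCast_mul_coeff_scale_succ (k n : ℕ) (F : ℝ≥0∞⟦X⟧) :
    (n : ℝ≥0∞) * PowerSeries.coeff n (scale (k + 1) (geo * F))
      = PowerSeries.coeff n (scale k (geo * F)) := by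
  rcases eq_or_ne n 0 with rfl | hn
  · simp [coeff_zero_scale_geo]
  · rw [coeff_scale, coeff_scale, invPow_add, ← mul_assoc, mul_left_comm,
      natCast_mul_invPow_one hn, mul_one]

/-- The Leibniz rule for `X d/dX`, in integrated form. -/
theorem scale_succ_mul_scale_succ (k l : ℕ) (F G : ℝ≥0∞⟦X⟧) :
    scale (k + 1) (geo * F) * scale (l + 1) (geo * G) =
      scale 1 (scale k (geo * F) * scale (l + 1) (geo * G)
        + scale (k + 1) (geo * F) * scale l (geo * G)) := by
  ext n
  rw [coeff_scale]
  rcases eq_or_ne n 0 with rfl | hn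
  · simp [invPow_apply_zero, PowerSeries.coeff_mul, coeff_zero_scale_geo]
  · rw [map_add, PowerSeries.coeff_mul, PowerSeries.coeff_mul, PowerSeries.coeff_mul,
      ← Finset.sum_add_distrib]
    have : ∀ p ∈ Finset.HasAntidiagonal.antidiagonal n,
        PowerSeries.coeff p.1 (scale k (geo * F)) * PowerSeries.coeff p.2 (scale (l + 1) (geo * G))
          + PowerSeries.coeff p.1 (scale (k + 1) (geo * F))
            * PowerSeries.coeff p.2 (scale l (geo * G))
        = n * (PowerSeries.coeff p.1 (scale (k + 1) (geo * F))
            * PowerSeries.coeff p.2 (scale (l + 1) (geo * G))) := by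
      intro p hp
      rw [← Finset.HasAntidiagonal.mem_antidiagonal.mp hp, ← natCast_mul_coeff_scale_succ k,
        ← natCast_mul_coeff_scale_succ l]
      push_cast
      ring
    rw [Finset.sum_congr rfl this, ← Finset.mul_sum, ← mul_assoc, mul_comm (invPow _ _),
      natCast_mul_invPow_one hn, one_mul]

/-- Sums of polylogarithms of weight `W`. -/
def polylogSpan (W : ℕ) : AddSubmonoid ℝ≥0∞⟦X⟧ :=
  AddSubmonoid.closure {F | ∃ w : List ℕ, (∀ k ∈ w, 1 ≤ k) ∧ w.sum = W ∧ F = polylog w}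

/-- Sums of polylogarithms of weight `W` that converge at `1`. -/
def convergentSpan (W : ℕ) : AddSubmonoid ℝ≥0∞⟦X⟧ :=
  AddSubmonoid.closure {F | ∃ (k : ℕ) (w : List ℕ), 2 ≤ k ∧ (∀ l ∈ w, 1 ≤ l) ∧ k + w.sum = W ∧
    F = polylog (k :: w)}

theorem polylog_mem {w : List ℕ} (hw : ∀ k ∈ w, 1 ≤ k) : polylog w ∈ polylogSpan w.sum :=
  AddSubmonoid.subset_closure ⟨w, hw, rfl, rfl⟩

theorem convergentSpan_le (W : ℕ) : convergentSpan W ≤ polylogSpan W := by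
  refine AddSubmonoid.closure_le.mpr ?_
  rintro _ ⟨k, w, hk, hw, rfl, rfl⟩
  refine AddSubmonoid.subset_closure ⟨k :: w, ?_, by simp, rfl⟩
  simpa using ⟨by omega, hw⟩

theorem scale_mem {k W : ℕ} (hk : 1 ≤ k) (hW : 1 ≤ W) {F : ℝ≥0∞⟦X⟧} (hF : F ∈ polylogSpan W) :
    scale k F ∈ convergentSpan (W + k) := by
  induction hF using AddSubmonoid.closure_induction with
  | mem F h =>
    obtain ⟨w, hw, rfl, rfl⟩ := h
    rcases w with _ | ⟨l, w⟩
    · simp at hW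
    · simp only [List.mem_cons, forall_eq_or_imp] at hw
      rw [polylog, scale_scale]
      exact AddSubmonoid.subset_closure
        ⟨k + l, w, by omega, hw.2, by simp; omega, rfl⟩
  | zero => rw [scale_zero_right]; exact zero_mem _
  | add F G _ _ hF hG => rw [scale_add]; exact add_mem hF hG

theorem scale_geo_mul_mem {k W : ℕ} (hk : 1 ≤ k) {F : ℝ≥0∞⟦X⟧} (hF : F ∈ polylogSpan W) :
    scale k (geo * F) ∈ polylogSpan (W + k) := by
  induction hF using AddSubmonoid.closure_induction with
  | mem F h =>
    obtain ⟨w, hw, rfl, rfl⟩ := h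
    exact AddSubmonoid.subset_closure ⟨k :: w, by simpa using ⟨hk, hw⟩, by simp; omega, rfl⟩
  | zero => rw [mul_zero, scale_zero_right]; exact zero_mem _
  | add F G _ _ hF hG => rw [mul_add, scale_add]; exact add_mem hF hG

theorem scale_geo_mul_mem_convergentSpan {k W : ℕ} (hk : 2 ≤ k) {F : ℝ≥0∞⟦X⟧}
    (hF : F ∈ polylogSpan W) : scale k (geo * F) ∈ convergentSpan (W + k) := by
  induction hF using AddSubmonoid.closure_induction with
  | mem F h =>
    obtain ⟨w, hw, rfl, rfl⟩ := h
    exact AddSubmonoid.subset_closure ⟨k, w, hk, hw, by omega, rfl⟩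
  | zero => rw [mul_zero, scale_zero_right]; exact zero_mem _
  | add F G _ _ hF hG => rw [mul_add, scale_add]; exact add_mem hF hG

/-- The shuffle product: polylogarithms are closed under multiplication. -/
theorem polylog_mul_polylog_mem (v w : List ℕ) (hv : ∀ k ∈ v, 1 ≤ k) (hw : ∀ k ∈ w, 1 ≤ k) :
    polylog v * polylog w ∈ polylogSpan (v.sum + w.sum) := by
  induction hN : v.sum + w.sum using Nat.strong_induction_on generalizing v w with
  | _ N ih =>
  rcases v with _ | ⟨k, v⟩
  · rw [polylog, one_mul, ← hN, List.sum_nil, zero_add]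
    exact polylog_mem hw
  rcases w with _ | ⟨l, w⟩
  · rw [polylog.eq_1, mul_one, ← hN, List.sum_nil, add_zero]
    exact polylog_mem hv
  have half : ∀ (k : ℕ) (v u : List ℕ), (∀ j ∈ v, 1 ≤ j) → (∀ j ∈ u, 1 ≤ j) → 1 ≤ u.sum →
      k + 1 + v.sum + u.sum = N →
      scale 1 (scale k (geo * polylog v) * polylog u) ∈ polylogSpan N := by
    intro k v u hv hu hu1 hN
    obtain ⟨M, rfl⟩ : ∃ M, N = M + 1 := ⟨N - 1, by omega⟩
    rcases k with _ | k
    · rw [scale_zero_left, mul_assoc]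
      exact scale_geo_mul_mem le_rfl (ih M (by omega) v u hv hu (by omega))
    · exact convergentSpan_le _ (scale_mem le_rfl (by omega)
        (ih M (by omega) ((k + 1) :: v) u (by simpa using hv) hu (by simp; omega)))
  obtain ⟨k, rfl⟩ : ∃ k', k = k' + 1 := ⟨k - 1, by have := hv k (by simp); omega⟩
  obtain ⟨l, rfl⟩ : ∃ l', l = l' + 1 := ⟨l - 1, by have := hw l (by simp); omega⟩
  simp only [List.sum_cons] at hN
  rw [polylog, polylog, scale_succ_mul_scale_succ, scale_add]
  refine add_mem ?_ ?_
  · exact half k v ((l + 1) :: w) (fun j hj => hv j (by simp [hj])) hw (by simp; omega)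
      (by simp; omega)
  · rw [mul_comm]
    exact half l w ((k + 1) :: v) (fun j hj => hw j (by simp [hj])) hv (by simp; omega)
      (by simp; omega)

theorem polylogSpan_mul_mem {V W : ℕ} {F G : ℝ≥0∞⟦X⟧} (hF : F ∈ polylogSpan V)
    (hG : G ∈ polylogSpan W) : F * G ∈ polylogSpan (V + W) := by
  induction hF using AddSubmonoid.closure_induction with
  | mem F h =>
    obtain ⟨v, hv, rfl, rfl⟩ := h
    induction hG using AddSubmonoid.closure_induction with
    | mem G h =>
      obtain ⟨w, hw, rfl, rfl⟩ := h
      exact polylog_mul_polylog_mem v w hv hw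
    | zero => rw [mul_zero]; exact zero_mem _
    | add F G _ _ hF hG => rw [mul_add]; exact add_mem hF hG
  | zero => rw [zero_mul]; exact zero_mem _
  | add F G _ _ hF hG => rw [add_mul]; exact add_mem hF hG

theorem polylog_mul_polylog_mem_convergentSpan {k l : ℕ} {v w : List ℕ} (hk : 2 ≤ k) (hl : 2 ≤ l)
    (hv : ∀ j ∈ v, 1 ≤ j) (hw : ∀ j ∈ w, 1 ≤ j) :
    polylog (k :: v) * polylog (l :: w) ∈ convergentSpan ((k + v.sum) + (l + w.sum)) := by
  obtain ⟨k, rfl⟩ : ∃ k', k = k' + 1 := ⟨k - 1, by omega⟩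
  obtain ⟨l, rfl⟩ : ∃ l', l = l' + 1 := ⟨l - 1, by omega⟩
  have half : ∀ a b : ℕ, 1 ≤ a → 1 ≤ b → a + v.sum + (b + w.sum) + 1
      = ((k + 1 + v.sum) + (l + 1 + w.sum)) →
      scale 1 (polylog (a :: v) * polylog (b :: w))
        ∈ convergentSpan ((k + 1 + v.sum) + (l + 1 + w.sum)) := by
    intro a b ha hb hab
    rw [← hab]
    refine scale_mem le_rfl (by omega) ?_
    have := polylog_mul_polylog_mem (a :: v) (b :: w) (by simpa using ⟨ha, hv⟩)
      (by simpa using ⟨hb, hw⟩)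
    simpa using this
  rw [polylog, polylog, scale_succ_mul_scale_succ, scale_add]
  exact add_mem (half k (l + 1) (by omega) (by omega) (by omega))
    (half (k + 1) l (by omega) (by omega) (by omega))

theorem convergentSpan_mul_mem {V W : ℕ} {F G : ℝ≥0∞⟦X⟧} (hF : F ∈ convergentSpan V)
    (hG : G ∈ convergentSpan W) : F * G ∈ convergentSpan (V + W) := by
  induction hF using AddSubmonoid.closure_induction with
  | mem F h =>
    obtain ⟨k, v, hk, hv, rfl, rfl⟩ := h
    induction hG using AddSubmonoid.closure_induction with
    | mem G h =>
      obtain ⟨l, w, hl, hw, rfl, rfl⟩ := h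
      exact polylog_mul_polylog_mem_convergentSpan hk hl hv hw
    | zero => rw [mul_zero]; exact zero_mem _
    | add F G _ _ hF hG => rw [mul_add]; exact add_mem hF hG
  | zero => rw [zero_mul]; exact zero_mem _
  | add F G _ _ hF hG => rw [add_mul]; exact add_mem hF hG

end Words

section Pairing

/-- The sum of the coefficients of `F`, weighted by `h`. -/
noncomputable def pairing (F : ℝ≥0∞⟦X⟧) (h : ℕ → ℝ≥0∞) : ℝ≥0∞ :=
  ∑' n, PowerSeries.coeff n F * h n

theorem pairing_add_left (F G : ℝ≥0∞⟦X⟧) (h : ℕ → ℝ≥0∞) :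
    pairing (F + G) h = pairing F h + pairing G h := by
  simp [pairing, add_mul, ENNReal.tsum_add]

theorem pairing_one (h : ℕ → ℝ≥0∞) : pairing 1 h = h 0 := by
  rw [pairing, tsum_eq_single 0 fun n hn => by simp [PowerSeries.coeff_one, hn]]
  simp

theorem pairing_mul (F G : ℝ≥0∞⟦X⟧) (h : ℕ → ℝ≥0∞) :
    pairing (F * G) h =
      ∑' m, PowerSeries.coeff m F * ∑' v, PowerSeries.coeff v G * h (m + v) := by
  simp_rw [pairing, PowerSeries.coeff_mul, ← ENNReal.tsum_mul_left]
  rw [← ENNReal.tsum_prod (f := fun m v =>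
      PowerSeries.coeff m F * (PowerSeries.coeff v G * h (m + v))),
    ← Finset.HasAntidiagonal.sigmaAntidiagonalEquivProd.tsum_eq, ENNReal.tsum_sigma']
  refine tsum_congr fun n => ?_
  rw [tsum_fintype, Finset.sum_mul, ← Finset.sum_coe_sort]
  refine Finset.sum_congr rfl fun p _ => ?_
  simp only [Finset.HasAntidiagonal.sigmaAntidiagonalEquivProd_apply]
  rw [Finset.HasAntidiagonal.mem_antidiagonal.mp p.2, mul_assoc]

theorem pairing_one_mul_pairing_one (F G : ℝ≥0∞⟦X⟧) :
    pairing F 1 * pairing G 1 = pairing (F * G) 1 := by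
  rw [pairing_mul, pairing, ← ENNReal.tsum_mul_right]
  simp [pairing]

theorem tsum_mul_ite (F : ℝ≥0∞⟦X⟧) (a : ℕ) (y : ℝ≥0∞) :
    ∑' n, PowerSeries.coeff n F * (if n < a then y else 0)
      = PowerSeries.coeff a (geo * F) * y := by
  rw [tsum_eq_sum (s := Finset.range a) fun n hn => by simp at hn; simp [hn], coeff_geo_mul,
    Finset.sum_mul]
  exact Finset.sum_congr rfl fun n hn => by rw [if_pos (Finset.mem_range.mp hn)]

theorem pairing_chainSum_lt_cons (F : ℝ≥0∞⟦X⟧) (k : ℕ) (fs : List (ℕ → ℝ≥0∞))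
    (h : ℕ → ℝ≥0∞) :
    pairing F (chainSum (· < ·) (invPow k :: fs) h)
      = pairing (scale k (geo * F)) (chainSum (· < ·) fs h) := by
  simp_rw [pairing, chainSum, ← ENNReal.tsum_mul_left]
  rw [ENNReal.tsum_comm]
  refine tsum_congr fun a => ?_
  rw [coeff_scale]
  rw [mul_comm (invPow k a) (PowerSeries.coeff a _), mul_assoc, ← tsum_mul_ite]
  exact tsum_congr fun n => by congr

theorem pairing_chainSum_le_cons (F : ℝ≥0∞⟦X⟧) (k : ℕ) (fs : List (ℕ → ℝ≥0∞))
    (h : ℕ → ℝ≥0∞) :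
    pairing F (chainSum (· ≤ ·) (invPow k :: fs) h)
      = pairing (scale k (geo * F) + scale k F) (chainSum (· ≤ ·) fs h) := by
  simp_rw [pairing, chainSum, ← ENNReal.tsum_mul_left]
  rw [ENNReal.tsum_comm]
  refine tsum_congr fun a => ?_
  rw [map_add, coeff_scale, coeff_scale, ← mul_add]
  have := tsum_mul_ite F (a + 1) (invPow k a * chainSum (· ≤ ·) fs h a)
  simp only [Nat.lt_succ_iff] at this
  rw [coeff_geo_mul, Finset.sum_range_succ, ← coeff_geo_mul] at this
  rw [mul_comm (invPow k a) (_ + _), mul_assoc, ← this]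
  exact tsum_congr fun n => by congr

theorem pairing_polylog_chainSum_lt (ks w : List ℕ) (h : ℕ → ℝ≥0∞) :
    pairing (polylog w) (chainSum (· < ·) (ks.map invPow) h)
      = pairing (polylog (ks.reverse ++ w)) h := by
  induction ks generalizing w with
  | nil => rfl
  | cons k ks ih =>
    rw [List.map_cons, pairing_chainSum_lt_cons, ← polylog, ih]
    simp

theorem chainSum_lt_zero (ks : List ℕ) (h : ℕ → ℝ≥0∞) :
    chainSum (· < ·) (ks.map invPow) h 0 = pairing (polylog ks.reverse) h := by
  rw [← pairing_one (chainSum _ _ h), ← polylog.eq_1, pairing_polylog_chainSum_lt, List.append_nil]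

theorem exists_pairing_chainSum_lt {W : ℕ} {F : ℝ≥0∞⟦X⟧} (hF : F ∈ polylogSpan W) {ks : List ℕ}
    (hne : ks ≠ []) (hks : ∀ k ∈ ks, 1 ≤ k) (hlast : ∀ k ∈ ks.getLast?, 2 ≤ k) :
    ∃ G ∈ convergentSpan (W + ks.sum),
      pairing F (chainSum (· < ·) (ks.map invPow) 1) = pairing G 1 := by
  induction ks generalizing W F with
  | nil => exact absurd rfl hne
  | cons k ks ih =>
    simp only [List.mem_cons, forall_eq_or_imp] at hks
    rw [List.map_cons, pairing_chainSum_lt_cons]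
    rcases ks with _ | ⟨l, ks⟩
    · refine ⟨_, ?_, rfl⟩
      simpa using scale_geo_mul_mem_convergentSpan (hlast k (by simp)) hF
    · obtain ⟨G, hG, h⟩ := ih (scale_geo_mul_mem hks.1 hF) (by simp) hks.2
        (by simpa only [List.getLast?_cons_cons] using hlast)
      exact ⟨G, by rwa [List.sum_cons, ← add_assoc], h⟩

theorem exists_pairing_chainSum_le {W : ℕ} {F : ℝ≥0∞⟦X⟧} (hW : 1 ≤ W) (hF : F ∈ polylogSpan W)
    {ks : List ℕ} (hne : ks ≠ []) (hks : ∀ k ∈ ks, 1 ≤ k) (hlast : ∀ k ∈ ks.getLast?, 2 ≤ k) :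
    ∃ G ∈ convergentSpan (W + ks.sum),
      pairing F (chainSum (· ≤ ·) (ks.map invPow) 1) = pairing G 1 := by
  induction ks generalizing W F with
  | nil => exact absurd rfl hne
  | cons k ks ih =>
    simp only [List.mem_cons, forall_eq_or_imp] at hks
    rw [List.map_cons, pairing_chainSum_le_cons]
    rcases ks with _ | ⟨l, ks⟩
    · refine ⟨_, ?_, rfl⟩
      simpa using add_mem (scale_geo_mul_mem_convergentSpan (hlast k (by simp)) hF)
        (scale_mem hks.1 hW hF)
    · obtain ⟨G, hG, h⟩ := ih (by omega) (add_mem (scale_geo_mul_mem hks.1 hF)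
        (convergentSpan_le _ (scale_mem hks.1 hW hF))) (by simp) hks.2
        (by simpa only [List.getLast?_cons_cons] using hlast)
      exact ⟨G, by rwa [List.sum_cons, ← add_assoc], h⟩

theorem polylog_singleton (k : ℕ) (hk : 1 ≤ k) (n : ℕ) :
    PowerSeries.coeff n (polylog [k]) = invPow k n := by
  rcases eq_or_ne n 0 with rfl | hn
  · rw [polylog, coeff_zero_scale_geo, invPow_apply_zero hk]
  · simp [polylog, coeff_scale, geo, hn]

/-- The star multiple zeta values are sums of multiple zeta values. -/
theorem exists_chainSum_le_zero {k : ℕ} {ks : List ℕ}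
    (hks : ∀ j ∈ k :: ks, 1 ≤ j) (hlast : ∀ j ∈ (k :: ks).getLast?, 2 ≤ j) :
    ∃ G ∈ convergentSpan (k + ks.sum),
      ∑' b, invPow k b * chainSum (· ≤ ·) (ks.map invPow) 1 b = pairing G 1 := by
  have hk : 1 ≤ k := hks k (by simp)
  have h : ∑' b, invPow k b * chainSum (· ≤ ·) (ks.map invPow) 1 b
      = pairing (polylog [k]) (chainSum (· ≤ ·) (ks.map invPow) 1) :=
    tsum_congr fun b => by rw [polylog_singleton k hk]
  rw [h]
  rcases ks with _ | ⟨l, ks⟩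
  · exact ⟨_, AddSubmonoid.subset_closure ⟨k, [], hlast k (by simp), by simp, rfl, rfl⟩, rfl⟩
  · refine exists_pairing_chainSum_le hk ?_ (by simp) (fun j hj => hks j (List.mem_cons_of_mem _ hj))
      (by simpa only [List.getLast?_cons_cons] using hlast)
    simpa using polylog_mem (w := [k]) (by simpa using hk)

end Pairing

section Convergence

theorem invPow_mul_ofReal_rpow_le {k : ℕ} (hk : 1 ≤ k) (n : ℕ) {a b : ℝ} (h : a - k ≤ b) :
    invPow k n * ENNReal.ofReal ((n : ℝ) ^ a) ≤ ENNReal.ofReal ((n : ℝ) ^ b) := by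
  rcases Nat.eq_zero_or_pos n with rfl | hn
  · simp [invPow_apply_zero hk]
  · have h0 : (0 : ℝ) < n := by positivity
    rw [invPow, ← ENNReal.ofReal_mul (by positivity)]
    refine ENNReal.ofReal_le_ofReal ?_
    rw [← Real.rpow_natCast, ← Real.rpow_neg h0.le, ← Real.rpow_add h0]
    exact Real.rpow_le_rpow_of_exponent_le (by exact_mod_cast hn) (by linarith)

theorem tsum_ofReal_rpow_ne_top {a : ℝ} (ha : a < -1) :
    ∑' n : ℕ, ENNReal.ofReal ((n : ℝ) ^ a) ≠ ⊤ :=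
  (Real.summable_nat_rpow.mpr ha).tsum_ofReal_ne_top

theorem exists_coeff_geo_mul_polylog_le (w : List ℕ) (hw : ∀ k ∈ w, 1 ≤ k) {ε : ℝ} (hε : 0 < ε) :
    ∃ C : ℝ≥0∞, C ≠ ⊤ ∧
      ∀ n, PowerSeries.coeff n (geo * polylog w) ≤ C * ENNReal.ofReal ((n : ℝ) ^ ε) := by
  induction w generalizing ε with
  | nil =>
    refine ⟨1, ENNReal.one_ne_top, fun n => ?_⟩
    rcases Nat.eq_zero_or_pos n with rfl | hn
    · simp [coeff_geo_mul]
    · rw [polylog, mul_one, one_mul, geo, PowerSeries.coeff_mk, if_neg hn.ne', ← ENNReal.ofReal_one]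
      exact ENNReal.ofReal_le_ofReal (Real.one_le_rpow (by exact_mod_cast hn) hε.le)
  | cons k w ih =>
    simp only [List.mem_cons, forall_eq_or_imp] at hw
    obtain ⟨C, hC, hle⟩ := ih hw.2 (half_pos hε)
    refine ⟨C * ∑' n : ℕ, ENNReal.ofReal ((n : ℝ) ^ (-1 - ε / 2)),
      ENNReal.mul_ne_top hC (tsum_ofReal_rpow_ne_top (by linarith)), fun n => ?_⟩
    rw [coeff_geo_mul, mul_assoc, ← ENNReal.tsum_mul_right, ← ENNReal.tsum_mul_left]
    refine le_trans (Finset.sum_le_sum fun j hj => ?_) (ENNReal.sum_le_tsum (Finset.range n))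
    rw [polylog, coeff_scale]
    have hk : (1 : ℝ) ≤ k := by exact_mod_cast hw.1
    have hjn : (j : ℝ) ≤ n := by exact_mod_cast (Finset.mem_range.mp hj).le
    rcases Nat.eq_zero_or_pos j with rfl | hj0
    · simp [invPow_apply_zero hw.1]
    have hj0 : (0 : ℝ) < j := by exact_mod_cast hj0
    calc invPow k j * PowerSeries.coeff j (geo * polylog w)
        ≤ invPow k j * (C * ENNReal.ofReal ((j : ℝ) ^ (ε / 2))) := by gcongr; exact hle j
      _ = C * (invPow k j * ENNReal.ofReal ((j : ℝ) ^ (ε / 2))) := by ring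
      _ ≤ C * ENNReal.ofReal ((j : ℝ) ^ (-1 - ε / 2 + ε)) := by
          gcongr
          exact invPow_mul_ofReal_rpow_le hw.1 j (by linarith)
      _ ≤ C * (ENNReal.ofReal ((j : ℝ) ^ (-1 - ε / 2)) * ENNReal.ofReal ((n : ℝ) ^ ε)) := by
          rw [Real.rpow_add hj0, ENNReal.ofReal_mul (by positivity)]
          gcongr

theorem pairing_polylog_ne_top {k : ℕ} {w : List ℕ} (hk : 2 ≤ k) (hw : ∀ j ∈ w, 1 ≤ j) :
    pairing (polylog (k :: w)) 1 ≠ ⊤ := by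
  obtain ⟨C, hC, hle⟩ := exists_coeff_geo_mul_polylog_le w hw (half_pos one_pos)
  refine ne_top_of_le_ne_top
    (ENNReal.mul_ne_top hC (tsum_ofReal_rpow_ne_top (a := -3 / 2) (by norm_num))) ?_
  rw [pairing, ← ENNReal.tsum_mul_left]
  refine ENNReal.tsum_le_tsum fun n => ?_
  have hk' : (2 : ℝ) ≤ k := by exact_mod_cast hk
  rw [Pi.one_apply, mul_one, polylog, coeff_scale]
  calc invPow k n * PowerSeries.coeff n (geo * polylog w)
      ≤ invPow k n * (C * ENNReal.ofReal ((n : ℝ) ^ (1 / 2 : ℝ))) := by gcongr; exact hle n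
    _ = C * (invPow k n * ENNReal.ofReal ((n : ℝ) ^ (1 / 2 : ℝ))) := by ring
    _ ≤ C * ENNReal.ofReal ((n : ℝ) ^ (-3 / 2 : ℝ)) := by
        gcongr
        exact invPow_mul_ofReal_rpow_le (by omega) n (by linarith)

end Convergence

section Mzv

theorem toReal_invPow (k n : ℕ) : (invPow k n).toReal = ((n : ℝ) ^ k)⁻¹ :=
  ENNReal.toReal_ofReal (by positivity)

theorem invPow_ne_top (k n : ℕ) : invPow k n ≠ ⊤ := ENNReal.ofReal_ne_top

theorem toReal_tsum_ite {α : Type*} (P : α → Prop) [DecidablePred P] {g : α → ℝ≥0∞} (hg : ∀ x, g x ≠ ⊤) :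
    (∑' x, if P x then g x else 0).toReal = ∑' x : {x // P x}, (g x).toReal := by
  rw [← ENNReal.tsum_toReal_eq fun x : {x // P x} => hg x]
  congr 1
  exact ((tsum_subtype {x | P x} g).trans
    (tsum_congr fun x => by simp [Set.indicator_apply])).symm

theorem isChainFrom_lt_iff {n : ℕ} {x : Fin n → ℕ} :
    IsChainFrom (· < ·) 0 x ↔ StrictMono x ∧ ∀ i, 0 < x i :=
  ⟨fun h => ⟨fun i j => h.2 i j, h.1⟩, fun h => ⟨h.2, fun _ _ hij => h.1 hij⟩⟩

theorem mzv_eq_toReal {r : ℕ} (k : Fin r → ℕ) :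
    mzv k = (pairing (polylog (List.ofFn k).reverse) 1).toReal := by
  rw [← chainSum_lt_zero, List.map_ofFn,
    ← tsum_isChainFrom (R := (· < ·)) fun _ _ _ => lt_trans]
  simp only [Pi.one_apply, mul_one, isChainFrom_lt_iff]
  refine Eq.trans (tsum_congr fun n => ?_)
    (toReal_tsum_ite _ fun x => ENNReal.prod_ne_top fun i _ => invPow_ne_top _ _).symm
  rw [ENNReal.toReal_prod]
  simp [toReal_invPow]

/-- The additive group generated by the multiple zeta values of weight `W`. -/
noncomputable def mzvSpan (W : ℕ) : AddSubgroup ℝ :=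
  AddSubgroup.closure {x | ∃ (d : ℕ) (k : Fin (d + 1) → ℕ), (∀ j, 1 ≤ k j) ∧
    2 ≤ k (Fin.last d) ∧ ∑ j, k j = W ∧ x = mzv k}

/-- A finite element of `[0, ∞]` which is an integral combination of multiple zeta values of
weight `W`. -/
def IsMzvCombination (W : ℕ) (x : ℝ≥0∞) : Prop := x ≠ ⊤ ∧ x.toReal ∈ mzvSpan W

theorem isMzvCombination_polylog {k : ℕ} {w : List ℕ} (hk : 2 ≤ k) (hw : ∀ j ∈ w, 1 ≤ j) :
    IsMzvCombination (k + w.sum) (pairing (polylog (k :: w)) 1) := by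
  refine ⟨pairing_polylog_ne_top hk hw, AddSubgroup.subset_closure ?_⟩
  have h : List.ofFn (Fin.snoc (α := fun _ => ℕ) w.reverse.get k) = w.reverse ++ [k] := by
    rw [List.ofFn_succ']
    simp only [Fin.snoc_castSucc, Fin.snoc_last, List.concat_eq_append, List.ofFn_get]
  refine ⟨w.reverse.length, Fin.snoc (α := fun _ => ℕ) w.reverse.get k, ?_, by simpa using hk,
    ?_, ?_⟩
  · rw [← List.forall_mem_ofFn_iff (P := fun j => 1 ≤ j), h]
    intro j hj
    simp only [List.mem_append, List.mem_reverse, List.mem_singleton] at hj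
    rcases hj with hj | rfl
    · exact hw j hj
    · omega
  · rw [← List.sum_ofFn, h]
    simp [add_comm]
  · rw [mzv_eq_toReal, h]
    simp

theorem IsMzvCombination.add {W : ℕ} {x y : ℝ≥0∞} (hx : IsMzvCombination W x)
    (hy : IsMzvCombination W y) : IsMzvCombination W (x + y) :=
  ⟨ENNReal.add_ne_top.mpr ⟨hx.1, hy.1⟩, by
    rw [ENNReal.toReal_add hx.1 hy.1]; exact add_mem hx.2 hy.2⟩

theorem IsMzvCombination.of_add_right {W : ℕ} {x y : ℝ≥0∞} (hxy : IsMzvCombination W (x + y))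
    (hy : IsMzvCombination W y) : IsMzvCombination W x := by
  have hx : x ≠ ⊤ := (ENNReal.add_ne_top.mp hxy.1).1
  refine ⟨hx, ?_⟩
  have := sub_mem hxy.2 hy.2
  rwa [ENNReal.toReal_add hx hy.1, add_sub_cancel_right] at this

theorem isMzvCombination_of_mem {W : ℕ} {F : ℝ≥0∞⟦X⟧} (hF : F ∈ convergentSpan W) :
    IsMzvCombination W (pairing F 1) := by
  induction hF using AddSubmonoid.closure_induction with
  | mem F h =>
    obtain ⟨k, w, hk, hw, rfl, rfl⟩ := h
    exact isMzvCombination_polylog hk hw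
  | zero => exact ⟨by simp [pairing], by simp [pairing]⟩
  | add F G _ _ hF hG => rw [pairing_add_left]; exact hF.add hG

theorem exists_coeff_of_mem_mzvSpan {W : ℕ} {x : ℝ} (hx : x ∈ mzvSpan W) :
    ∃ (N : ℕ) (coef : Fin N → ℤ) (d : Fin N → ℕ) (ks : (i : Fin N) → Fin (d i + 1) → ℕ),
      (∀ i j, 1 ≤ ks i j) ∧ (∀ i, 2 ≤ ks i (Fin.last (d i))) ∧ (∀ i, ∑ j, ks i j = W) ∧
      x = ∑ i, (coef i : ℝ) * mzv (ks i) := by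
  suffices h : ∃ L : List (ℤ × Σ d : ℕ, Fin (d + 1) → ℕ),
      (∀ p ∈ L, (∀ j, 1 ≤ p.2.2 j) ∧ 2 ≤ p.2.2 (Fin.last p.2.1) ∧ ∑ j, p.2.2 j = W) ∧
      x = (L.map fun p => (p.1 : ℝ) * mzv p.2.2).sum by
    obtain ⟨L, hL, rfl⟩ := h
    refine ⟨L.length, fun i => L[i].1, fun i => L[i].2.1, fun i => L[i].2.2,
      fun i => (hL L[i] (List.getElem_mem _)).1, fun i => (hL L[i] (List.getElem_mem _)).2.1,
      fun i => (hL L[i] (List.getElem_mem _)).2.2, ?_⟩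
    exact (Fin.sum_univ_fun_getElem L fun p => (p.1 : ℝ) * mzv p.2.2).symm
  induction hx using AddSubgroup.closure_induction with
  | mem x h =>
    obtain ⟨d, k, h1, h2, h3, rfl⟩ := h
    exact ⟨[(1, ⟨d, k⟩)], by simpa using ⟨h1, h2, h3⟩, by simp⟩
  | zero => exact ⟨[], by simp, by simp⟩
  | add x y _ _ hx hy =>
    obtain ⟨L, hL, rfl⟩ := hx
    obtain ⟨M, hM, rfl⟩ := hy
    refine ⟨L ++ M, fun p hp => ?_, by simp⟩
    exact (List.mem_append.mp hp).elim (hL p) (hM p)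
  | neg x _ hx =>
    obtain ⟨L, hL, rfl⟩ := hx
    refine ⟨L.map fun p => (-p.1, p.2), ?_, ?_⟩
    · intro p hp
      obtain ⟨q, hq, rfl⟩ := List.mem_map.mp hp
      exact hL q hq
    · rw [List.sum_neg, List.map_map, List.map_map]
      simp [Function.comp_def]

end Mzv

section Hook

/-- Iterated sum over chains `v > b₁ > b₂ > ⋯`, weighted by `h` at the smallest element. -/
noncomputable def truncSum : List ℕ → (ℕ → ℝ≥0∞) → ℕ → ℝ≥0∞
  | [], h, v => h v
  | e :: p, h, v => ∑ b ∈ Finset.range v, invPow e b * truncSum p h b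

theorem truncSum_append_singleton (p : List ℕ) (e : ℕ) (h : ℕ → ℝ≥0∞) :
    truncSum (p ++ [e]) h = truncSum p (truncSum [e] h) := by
  induction p with
  | nil => rfl
  | cons k p ih => funext v; simp only [List.cons_append, truncSum, ih]

theorem truncSum_add (p : List ℕ) (g h : ℕ → ℝ≥0∞) :
    truncSum p (g + h) = truncSum p g + truncSum p h := by
  induction p with
  | nil => rfl
  | cons k p ih =>
    funext v
    simp [truncSum, ih, mul_add, Finset.sum_add_distrib]

theorem truncSum_const (p : List ℕ) (z : ℝ≥0∞) :
    truncSum p (fun _ => z) = fun v => z * truncSum p 1 v := by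
  induction p with
  | nil => funext v; simp [truncSum]
  | cons k p ih =>
    funext v
    simp only [truncSum, ih, Finset.mul_sum]
    exact Finset.sum_congr rfl fun b _ => mul_left_comm _ _ _

theorem truncSum_one {p : List ℕ} (hp : ∀ k ∈ p, 1 ≤ k) {v : ℕ} (hv : 0 < v) :
    truncSum p 1 v = PowerSeries.coeff v (geo * polylog p) := by
  induction p generalizing v with
  | nil => simp [truncSum, polylog, geo, hv.ne']
  | cons k p ih =>
    simp only [List.mem_cons, forall_eq_or_imp] at hp
    rw [truncSum, coeff_geo_mul]
    refine Finset.sum_congr rfl fun b _ => ?_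
    rw [polylog, coeff_scale]
    rcases Nat.eq_zero_or_pos b with rfl | hb
    · simp [invPow_apply_zero hp.1]
    · rw [ih hp.2 hb]

theorem chainSum_le_cons_add_truncSum (e : ℕ) (fs : List (ℕ → ℝ≥0∞)) (h : ℕ → ℝ≥0∞) :
    chainSum (· ≤ ·) (invPow e :: fs) h + truncSum [e] (chainSum (· ≤ ·) fs h)
      = fun _ => ∑' b, invPow e b * chainSum (· ≤ ·) fs h b := by
  funext v
  have h2 : truncSum [e] (chainSum (· ≤ ·) fs h) v
      = ∑' b, if b < v then invPow e b * chainSum (· ≤ ·) fs h b else 0 := by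
    rw [tsum_eq_sum (s := Finset.range v) fun n hn => by simp at hn; simp [hn]]
    exact Finset.sum_congr rfl fun n hn => by rw [if_pos (Finset.mem_range.mp hn)]; rfl
  rw [Pi.add_apply, h2, chainSum, ← ENNReal.tsum_add]
  refine tsum_congr fun b => ?_
  rcases le_or_gt v b with hb | hb
  · rw [if_pos hb, if_neg hb.not_gt, add_zero]
  · rw [if_neg hb.not_ge, if_pos hb, zero_add]

theorem chainSum_lt_shift (ks : List ℕ) (M v : ℕ) :
    chainSum (· < ·) (ks.map fun k a => invPow k (M + a)) 1 v
      = chainSum (· < ·) (ks.map invPow) 1 (M + v) := by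
  induction ks generalizing v with
  | nil => rfl
  | cons k ks ih =>
    simp only [List.map_cons, chainSum]
    refine (tsum_congr fun a => ?_).trans (((add_right_injective M).tsum_eq
      (f := fun u => if M + v < u then
        invPow k u * chainSum (· < ·) (ks.map invPow) 1 u else 0) fun u hu => ?_).trans
      (tsum_congr fun u => by congr))
    · simp only [ih, add_lt_add_iff_left]
    · have : M + v < u := by
        by_contra h
        exact hu (if_neg h)
      exact ⟨u - M, by simp only; omega⟩

/-- The sum over `m` and `v > 0` of `F_m * h v * H (m + v)`, where `F_m` are the coefficients
of `F`. -/
noncomputable def shiftedPairing (F : ℝ≥0∞⟦X⟧) (H h : ℕ → ℝ≥0∞) : ℝ≥0∞ :=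
  ∑' m, PowerSeries.coeff m F * ∑' v, if 0 < v then h v * H (m + v) else 0

theorem shiftedPairing_add (F : ℝ≥0∞⟦X⟧) (H g h : ℕ → ℝ≥0∞) :
    shiftedPairing F H (g + h) = shiftedPairing F H g + shiftedPairing F H h := by
  simp_rw [shiftedPairing, ← ENNReal.tsum_add, ← mul_add, ← ENNReal.tsum_add]
  refine tsum_congr fun m => congrArg _ (tsum_congr fun v => ?_)
  split_ifs <;> simp [add_mul]

theorem shiftedPairing_mul_left (F : ℝ≥0∞⟦X⟧) (H h : ℕ → ℝ≥0∞) (z : ℝ≥0∞) :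
    shiftedPairing F H (fun v => z * h v) = z * shiftedPairing F H h := by
  simp_rw [shiftedPairing, ← ENNReal.tsum_mul_left]
  refine tsum_congr fun m => tsum_congr fun v => ?_
  split_ifs
  · ring
  · simp

theorem shiftedPairing_truncSum_one (F : ℝ≥0∞⟦X⟧) (H : ℕ → ℝ≥0∞) {p : List ℕ}
    (hp : ∀ k ∈ p, 1 ≤ k) :
    shiftedPairing F H (truncSum p 1) = pairing (geo * (F * polylog p)) H := by
  rw [mul_left_comm, pairing_mul, shiftedPairing]
  refine tsum_congr fun m => congrArg _ (tsum_congr fun v => ?_)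
  rcases Nat.eq_zero_or_pos v with rfl | hv
  · simp [coeff_geo_mul]
  · rw [if_pos hv, truncSum_one hp hv]

theorem isMzvCombination_shiftedPairing {t : ℕ} {F : ℝ≥0∞⟦X⟧} (hF : F ∈ polylogSpan t)
    {k : ℕ} {ks : List ℕ} (hks : ∀ j ∈ k :: ks, 1 ≤ j) (hlast : ∀ j ∈ (k :: ks).getLast?, 2 ≤ j)
    {es : List ℕ} (hes : ∀ j ∈ es, 1 ≤ j) (hesl : ∀ j ∈ es.getLast?, 2 ≤ j)
    {p : List ℕ} (hp : ∀ j ∈ p, 1 ≤ j) :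
    IsMzvCombination (t + p.sum + es.sum + (k :: ks).sum)
      (shiftedPairing F (fun u => invPow k u * chainSum (· < ·) (ks.map invPow) 1 u)
        (truncSum p (chainSum (· ≤ ·) (es.map invPow) 1))) := by
  set H : ℕ → ℝ≥0∞ := fun u => invPow k u * chainSum (· < ·) (ks.map invPow) 1 u with hH
  have base : ∀ {p : List ℕ}, (∀ j ∈ p, 1 ≤ j) → ∃ G ∈ convergentSpan (t + p.sum + (k :: ks).sum),
      shiftedPairing F H (truncSum p 1) = pairing G 1 := by
    intro p hp
    obtain ⟨G, hG, h⟩ := exists_pairing_chainSum_lt (polylogSpan_mul_mem hF (polylog_mem hp))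
      (List.cons_ne_nil k ks) hks hlast
    refine ⟨G, hG, ?_⟩
    rw [← h, List.map_cons, pairing_chainSum_lt_cons, shiftedPairing_truncSum_one F H hp]
    refine tsum_congr fun n => ?_
    rw [coeff_scale, hH, mul_comm (invPow k n) (PowerSeries.coeff n _), mul_assoc]
  induction es generalizing p with
  | nil =>
    obtain ⟨G, hG, h⟩ := base hp
    change IsMzvCombination _ (shiftedPairing F H (truncSum p 1))
    rw [h, List.sum_nil, add_zero]
    exact isMzvCombination_of_mem hG
  | cons e es ih =>
    have hes' : ∀ j ∈ es, 1 ≤ j := fun j hj => hes j (List.mem_cons_of_mem _ hj)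
    have hesl' : ∀ j ∈ es.getLast?, 2 ≤ j := by
      rcases es with _ | ⟨l, es⟩
      · simp
      · simpa only [List.getLast?_cons_cons] using hesl
    have hrest := ih hes' hesl' (p := p ++ [e]) fun j hj =>
      (List.mem_append.mp hj).elim (hp j) fun hj => hes j (by simp at hj; simp [hj])
    obtain ⟨Z, hZ, hz⟩ := exists_chainSum_le_zero hes hesl
    obtain ⟨G, hG, hg⟩ := base hp
    have htotal := congrArg (fun f => shiftedPairing F H (truncSum p f))
      (chainSum_le_cons_add_truncSum e (es.map invPow) 1)
    simp only [truncSum_add, shiftedPairing_add, truncSum_const, shiftedPairing_mul_left, hz, hg,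
      pairing_one_mul_pairing_one, ← truncSum_append_singleton] at htotal
    refine IsMzvCombination.of_add_right (y := shiftedPairing F H
      (truncSum (p ++ [e]) (chainSum (· ≤ ·) (es.map invPow) 1))) ?_ ?_
    · rw [List.map_cons, htotal]
      convert isMzvCombination_of_mem (convergentSpan_mul_mem hZ hG) using 1
      simp only [List.sum_cons]
      ring
    · convert hrest using 1
      simp only [List.sum_append, List.sum_cons, List.sum_nil]
      ring

theorem isChainFrom_le_iff {n c : ℕ} {x : Fin n → ℕ} :
    IsChainFrom (· ≤ ·) c x ↔ Monotone x ∧ ∀ i, c ≤ x i :=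
  ⟨fun h => ⟨fun i j hij => hij.eq_or_lt.elim (fun e => e ▸ le_rfl) (h.2 i j), h.1⟩,
    fun h => ⟨h.2, fun _ _ hij => h.1 hij.le⟩⟩

open Classical in
theorem tsum_column (r M : ℕ) (kc : Fin (r + 1) → ℕ) (T : ℕ → ℝ≥0∞) :
    (∑' v : Fin (r + 1) → ℕ, if IsChainFrom (· < ·) 0 v then
        (∏ i, invPow (kc i) (M + v i)) * T (v 0) else 0)
      = ∑' v, if 0 < v then T v * (invPow (kc 0) (M + v) *
          chainSum (· < ·) ((List.ofFn fun i : Fin r => kc i.succ).map invPow) 1 (M + v)) else 0 := by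
  have h := tsum_isChainFrom (R := (· < ·)) (fun _ _ _ => lt_trans)
    (Fin.cons (fun a => invPow (kc 0) (M + a) * T a) fun i a => invPow (kc i.succ) (M + a) :
      Fin (r + 1) → ℕ → ℝ≥0∞) 1 0
  simp only [Fin.prod_univ_succ, Fin.cons_zero, Fin.cons_succ, Pi.one_apply, mul_one,
    List.ofFn_succ, chainSum] at h
  trans
  swap
  · trans
    · exact h
    · refine tsum_congr fun v => ?_
      split_ifs
      · rw [← chainSum_lt_shift, List.map_ofFn, mul_comm (invPow _ _) (T v), mul_assoc]
        rfl
      · rfl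
  · refine tsum_congr fun v => ?_
    split_ifs
    · rw [Fin.prod_univ_succ]
      ring
    · rfl

open Classical in
theorem tsum_chain_mul_last (s : ℕ) (t : Fin (s + 1) → ℕ) (H : ℕ → ℝ≥0∞) :
    (∑' m : Fin (s + 1) → ℕ, if IsChainFrom (· < ·) 0 m then
        (∏ i, invPow (t i) (m i)) * H (m (Fin.last s)) else 0)
      = pairing (polylog (List.ofFn t).reverse) H := by
  rw [← chainSum_lt_zero, List.map_ofFn, ← tsum_isChainFrom (R := (· < ·)) fun _ _ _ => lt_trans]
  refine tsum_congr fun m => ?_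
  rw [← Fin.succ_last, Fin.cons_succ]
  rfl

theorem tsum_subtype_congr {α : Type*} {P Q : α → Prop} {f : {x // P x} → ℝ} {g : {x // Q x} → ℝ}
    (h : ∀ x, P x ↔ Q x) (hfg : ∀ x hP hQ, f ⟨x, hP⟩ = g ⟨x, hQ⟩) : ∑' x, f x = ∑' x, g x := by
  obtain rfl : P = Q := funext fun x => propext (h x)
  exact tsum_congr fun x => hfg x x.2 x.2

open Classical in
theorem efHook_eq_toReal (s n r : ℕ) (t : Fin (s + 1) → ℕ) (kr : Fin n → ℕ)
    (kc : Fin (r + 1) → ℕ) :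
    efHook (s + 1) n (r + 1) s.succ_pos r.succ_pos t kr kc =
      (shiftedPairing (polylog (List.ofFn t).reverse)
        (fun u => invPow (kc 0) u *
          chainSum (· < ·) ((List.ofFn fun i : Fin r => kc i.succ).map invPow) 1 u)
        (chainSum (· ≤ ·) ((List.ofFn kr).map invPow) 1)).toReal := by
  set T := chainSum (· ≤ ·) ((List.ofFn kr).map invPow) 1 with hT
  have hrow : ∀ c, (∑' b : Fin n → ℕ, if IsChainFrom (· ≤ ·) c b then
      ∏ j, invPow (kr j) (b j) else 0) = T c := by
    intro c
    rw [hT, List.map_ofFn, ← tsum_isChainFrom (R := (· ≤ ·)) fun _ _ _ => le_trans]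
    simp
  trans (∑' x : (Fin (s + 1) → ℕ) × (Fin (r + 1) → ℕ) × (Fin n → ℕ),
    if IsChainFrom (· < ·) 0 x.1 ∧ IsChainFrom (· < ·) 0 x.2.1 ∧ IsChainFrom (· ≤ ·) (x.2.1 0) x.2.2
    then (∏ i, invPow (t i) (x.1 i)) * (∏ j, invPow (kr j) (x.2.2 j))
      * ∏ i, invPow (kc i) (x.1 (Fin.last s) + x.2.1 i) else 0).toReal
  · refine Eq.trans ?_ (toReal_tsum_ite _ fun x => ENNReal.mul_ne_top (ENNReal.mul_ne_top ?_ ?_)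
      ?_).symm
    any_goals exact ENNReal.prod_ne_top fun _ _ => invPow_ne_top _ _
    rw [efHook]
    refine tsum_subtype_congr (fun x => ?_) fun x _ _ => ?_
    · rw [isChainFrom_lt_iff, isChainFrom_lt_iff, isChainFrom_le_iff]
      constructor
      · rintro ⟨h1, h2, h3, h4, h5⟩
        exact ⟨⟨h1, h2⟩, ⟨h3, fun i => h4.trans_le (h3.monotone (Fin.zero_le i))⟩, h5⟩
      · rintro ⟨⟨h1, h2⟩, ⟨h3, h4⟩, h5⟩
        exact ⟨h1, h2, h3, h4 0, h5⟩
    · simp only [ENNReal.toReal_mul, ENNReal.toReal_prod, toReal_invPow, Finset.prod_inv_distrib]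
      rfl
  · congr 1
    rw [shiftedPairing]
    simp_rw [← tsum_column]
    rw [← pairing, ← tsum_chain_mul_last, ENNReal.tsum_prod']
    refine tsum_congr fun m => ?_
    by_cases hm : IsChainFrom (· < ·) 0 m
    swap
    · simp [hm]
    rw [if_pos hm, ENNReal.tsum_prod', ← ENNReal.tsum_mul_left]
    refine tsum_congr fun v => ?_
    by_cases hv : IsChainFrom (· < ·) 0 v
    swap
    · simp [hv]
    rw [if_pos hv, ← hrow, ← ENNReal.tsum_mul_left, ← ENNReal.tsum_mul_left]
    refine tsum_congr fun b => ?_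
    simp only [hm, hv, true_and]
    split_ifs
    · ring
    · simp

end Hook

theorem two_le_of_mem_getLast?_ofFn {n : ℕ} {k : Fin n → ℕ}
    (h : ∀ hn : 0 < n, 2 ≤ k ⟨n - 1, by omega⟩) : ∀ j ∈ (List.ofFn k).getLast?, 2 ≤ j := by
  rcases n with _ | n
  · simp
  · rw [List.ofFn_succ', List.concat_eq_append, List.getLast?_concat]
    rintro _ ⟨⟩
    exact h n.succ_pos

/-- Every elementary factorial Schur multiple zeta value of hook type (positive integer
exponents, corner and final exponents ≥ 2) is a ℤ-linear combination of multiple zeta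
values of the same weight. -/
theorem efHook_mem_mzv_span (s n r : ℕ) (hs : 0 < s) (hr : 0 < r)
    (t : Fin s → ℕ) (kr : Fin n → ℕ) (kc : Fin r → ℕ)
    (ht : ∀ i, 1 ≤ t i) (htl : 2 ≤ t ⟨s - 1, by omega⟩)
    (hkr : ∀ j, 1 ≤ kr j) (hkrl : ∀ h : 0 < n, 2 ≤ kr ⟨n - 1, by omega⟩)
    (hkc : ∀ i, 1 ≤ kc i) (hkcl : 2 ≤ kc ⟨r - 1, by omega⟩) :
    ∃ (N : ℕ) (coef : Fin N → ℤ) (d : Fin N → ℕ) (ks : (i : Fin N) → Fin (d i + 1) → ℕ),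
      (∀ i j, 1 ≤ ks i j) ∧ (∀ i, 2 ≤ ks i (Fin.last (d i)))
      ∧ (∀ i, (∑ j, ks i j) = (∑ i, t i) + (∑ j, kr j) + ∑ i, kc i)
      ∧ efHook s n r hs hr t kr kc = ∑ i, (coef i : ℝ) * mzv (ks i) := by
  obtain ⟨s, rfl⟩ : ∃ s', s = s' + 1 := ⟨s - 1, by omega⟩
  obtain ⟨r, rfl⟩ : ∃ r', r = r' + 1 := ⟨r - 1, by omega⟩
  rw [← List.sum_ofFn, ← List.sum_ofFn, ← List.sum_ofFn]
  refine exists_coeff_of_mem_mzvSpan ?_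
  rw [efHook_eq_toReal]
  have hmem {n : ℕ} {k : Fin n → ℕ} (h : ∀ i, 1 ≤ k i) : ∀ j ∈ List.ofFn k, 1 ≤ j :=
    List.forall_mem_ofFn_iff.mpr h
  have hF : polylog (List.ofFn t).reverse ∈ polylogSpan (List.ofFn t).sum := by
    rw [← List.sum_reverse]
    exact polylog_mem fun j hj => hmem ht j (List.mem_reverse.mp hj)
  have hcol : List.ofFn kc = kc 0 :: List.ofFn fun i => kc i.succ := List.ofFn_succ
  have h := isMzvCombination_shiftedPairing hF (hcol ▸ hmem hkc)
    (hcol ▸ two_le_of_mem_getLast?_ofFn fun _ => hkcl) (hmem hkr)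
    (two_le_of_mem_getLast?_ofFn hkrl) (p := []) (by simp)
  rw [← hcol, List.sum_nil, add_zero] at h
  exact h.2
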